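/- For a periodic linear discrete Lagrangian system, the ρ-Hessian at ρ = −1, H_{−1}, is a real symmetric matrix; if H_{−1} is invertible and σ · (−1)^{ind(H_{−1})} < 0, where σ = sign(∏_{i=1}^n det B_i), then the monodromy matrix P has a real eigenvalue ρ < −1. -/

import Mathlib

open Matrix BigOperators

/-- The transfer matrix `T_i` of a periodic linear discrete Lagrangian system. -/
noncomputable def transferMatrix (m : ℕ) (A B : ℤ → Matrix (Fin m) (Fin m) ℝ) (i : ℤ) :
    Matrix (Fin m ⊕ Fin m) (Fin m ⊕ Fin m) ℝ :=
  Matrix.fromBlocks 0 1 (-(((B i)ᵀ)⁻¹ * B (i - 1))) (((B i)ᵀ)⁻¹ * A i)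

/-- The monodromy matrix `P = T_n ⋯ T_1`. -/
noncomputable def monodromy (m n : ℕ) (A B : ℤ → Matrix (Fin m) (Fin m) ℝ) :
    Matrix (Fin m ⊕ Fin m) (Fin m ⊕ Fin m) ℝ :=
  (List.range n).foldl (fun M i => transferMatrix m A B ((i : ℤ) + 1) * M) 1

/-- The `ρ`-Hessian at `ρ = -1`: the `(mn) × (mn)` real matrix acting by
`(H₋₁ u)_i = A_i u_i - B_{i-1} u_{i-1} - B_iᵀ u_{i+1}` with the antiperiodic
conventions `u_0 = -u_n`, `u_{n+1} = -u_1`. -/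
noncomputable def hessianNeg (m n : ℕ) [NeZero n] (A B : ℤ → Matrix (Fin m) (Fin m) ℝ) :
    Matrix (Fin n × Fin m) (Fin n × Fin m) ℝ :=
  fun p q =>
    (if q.1 = p.1 then A ((p.1 : ℕ) : ℤ) p.2 q.2 else 0)
    + (if q.1 = p.1 - 1 then
        -((if (p.1 : ℕ) = 0 then (-1 : ℝ) else 1) * B (((p.1 : ℕ) : ℤ) - 1) p.2 q.2) else 0)
    + (if q.1 = p.1 + 1 then
        -((if (p.1 : ℕ) = n - 1 then (-1 : ℝ) else 1) * B ((p.1 : ℕ) : ℤ) q.2 p.2) else 0)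

/-- The (Morse) index of a real symmetric matrix: the number of its negative
eigenvalues counted with multiplicity, equivalently the maximal dimension of a
subspace on which the associated quadratic form is negative definite. -/
noncomputable def matIndex {N : Type*} [Fintype N] (Q : Matrix N N ℝ) : ℕ :=
  sSup {d : ℕ | ∃ W : Submodule ℝ (N → ℝ), Module.finrank ℝ W = d ∧
    ∀ x ∈ W, x ≠ 0 → x ⬝ᵥ Q *ᵥ x < 0}

set_option linter.unusedSectionVars false
set_option linter.unusedSimpArgs false

section Helpers
variable {n : ℕ} [NeZero n] {S : Type*} [Fintype S] [DecidableEq S]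

theorem matIndex_sign {N : Type*} [Fintype N] [DecidableEq N] (Q : Matrix N N ℝ)
    (hQ : Qᵀ = Q) (hdet : IsUnit Q.det) : 0 < Q.det * (-1 : ℝ) ^ matIndex Q := by
  have hH : Q.IsHermitian := by
    rw [Matrix.IsHermitian, Matrix.conjTranspose_eq_transpose_of_trivial, hQ]
  set l := hH.eigenvalues with hl
  set U : Matrix N N ℝ := (hH.eigenvectorUnitary : Matrix N N ℝ) with hU
  have hUU : Uᵀ * U = 1 := by
    have := Unitary.coe_star_mul_self hH.eigenvectorUnitary
    rwa [Matrix.star_eq_conjTranspose, Matrix.conjTranspose_eq_transpose_of_trivial] at this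
  have hUU' : U * Uᵀ = 1 := mul_eq_one_comm.mp hUU
  have hspec : Q = U * diagonal l * Uᵀ := by
    have := hH.spectral_theorem
    rw [Unitary.conjStarAlgAut_apply] at this
    rw [Matrix.star_eq_conjTranspose, Matrix.conjTranspose_eq_transpose_of_trivial] at this
    exact this
  have hform : ∀ x : N → ℝ, x ⬝ᵥ Q *ᵥ x = ∑ i, l i * (Uᵀ *ᵥ x) i ^ 2 := by
    intro x
    rw [hspec, ← Matrix.mulVec_mulVec, ← Matrix.mulVec_mulVec, Matrix.dotProduct_mulVec,
      ← Matrix.mulVec_transpose, dotProduct]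
    refine Finset.sum_congr rfl fun i _ => ?_
    rw [Matrix.mulVec_diagonal]
    ring
  have hidx : matIndex Q = Fintype.card {i // l i < 0} := by
    unfold matIndex
    refine IsGreatest.csSup_eq ⟨?_, ?_⟩
    · let f : ({i // l i < 0} → ℝ) →ₗ[ℝ] (N → ℝ) :=
        U.mulVecLin ∘ₗ Function.ExtendByZero.linearMap ℝ (Subtype.val)
      have hf : ∀ y, Uᵀ *ᵥ (f y) = Function.extend Subtype.val y 0 := by
        intro y
        simp [f, Matrix.mulVec_mulVec, hUU]
        rfl
      have hinj : Function.Injective f := by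
        intro y z h
        have h2 := congrArg (fun v => Uᵀ *ᵥ v) h
        simp only [hf] at h2
        ext i
        have h3 := congrFun h2 i.1
        rwa [Subtype.val_injective.extend_apply, Subtype.val_injective.extend_apply] at h3
      refine ⟨LinearMap.range f, ?_, ?_⟩
      · rw [LinearMap.finrank_range_of_inj hinj]; simp
      · rintro _ ⟨y, rfl⟩ hne
        rw [hform, hf]
        have hy : y ≠ 0 := by rintro rfl; simp at hne
        obtain ⟨i, hi⟩ := Function.ne_iff.mp hy
        refine Finset.sum_neg' (fun j _ => ?_) ⟨i.1, Finset.mem_univ _, ?_⟩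
        · by_cases hj : l j < 0
          · exact mul_nonpos_of_nonpos_of_nonneg hj.le (sq_nonneg _)
          · rw [Function.extend_apply' _ _ _ (by rintro ⟨a, rfl⟩; exact hj a.2)]
            simp
        · rw [Subtype.val_injective.extend_apply]
          exact mul_neg_of_neg_of_pos i.2 (by have : y i ≠ 0 := hi
                                              positivity)
    · rintro d ⟨W, rfl, hW⟩
      let g : W →ₗ[ℝ] ({i // l i < 0} → ℝ) :=
        (LinearMap.funLeft ℝ ℝ Subtype.val ∘ₗ Uᵀ.mulVecLin) ∘ₗ W.subtype
      have hg : Function.Injective g := by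
        rw [injective_iff_map_eq_zero]
        intro x hx
        by_contra hne
        have h1 := hW x.1 x.2 (by simpa using hne)
        rw [hform] at h1
        refine absurd h1 (not_lt.mpr (Finset.sum_nonneg fun i _ => ?_))
        by_cases hi : l i < 0
        · have : (Uᵀ *ᵥ x.1) i = 0 := congrFun hx ⟨i, hi⟩
          rw [this]; simp
        · exact mul_nonneg (not_lt.mp hi) (sq_nonneg _)
      have := LinearMap.finrank_le_finrank_of_injective hg
      simpa using this
  have hdet2 : Q.det = ∏ i, l i := by
    simpa using hH.det_eq_prod_eigenvalues
  have hne : ∀ i, l i ≠ 0 := by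
    intro i hi
    rw [hdet2, Finset.prod_eq_zero (Finset.mem_univ i) hi] at hdet
    simp at hdet
  have hpow : (-1 : ℝ) ^ matIndex Q = ∏ i, (if l i < 0 then (-1 : ℝ) else 1) := by
    rw [hidx, Finset.prod_ite]
    simp [Fintype.card_subtype]
  rw [hdet2, hpow, ← Finset.prod_mul_distrib]
  refine Finset.prod_pos fun i _ => ?_
  split_ifs with h
  · linarith
  · have := lt_of_le_of_ne (not_lt.mp h) (hne i).symm
    linarith

theorem exists_root_lt_neg_one {N : Type*} [Fintype N] [DecidableEq N] [Nonempty N]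
    (P : Matrix N N ℝ) (h : (P + 1).det < 0) :
    ∃ ρ : ℝ, ρ < -1 ∧ (P - ρ • 1).det = 0 := by
  have hev : ∀ t : ℝ, ((-P).charpoly).eval t = (P + t • 1).det := by
    intro t
    rw [Matrix.eval_charpoly]
    congr 1
    rw [sub_neg_eq_add, add_comm, Matrix.scalar_apply, Matrix.smul_one_eq_diagonal]
  have ht := Polynomial.tendsto_atTop_of_leadingCoeff_nonneg (-P).charpoly
    (by rw [Matrix.charpoly_degree_eq_dim]; exact_mod_cast Fintype.card_pos)
    (by rw [(Matrix.charpoly_monic _).leadingCoeff]; exact zero_le_one)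
  obtain ⟨t, ht0, ht1⟩ := ((ht.eventually_ge_atTop 0).and (Filter.eventually_ge_atTop 1)).exists
  have h1 : ((-P).charpoly).eval 1 < 0 := by rw [hev]; simpa using h
  obtain ⟨s, hs, hs0⟩ := intermediate_value_Icc ht1
    ((-P).charpoly.continuous.continuousOn) ⟨h1.le, ht0⟩
  have hs0 : ((-P).charpoly).eval s = 0 := hs0
  refine ⟨-s, ?_, ?_⟩
  · have : s ≠ 1 := by rintro rfl; linarith
    have := lt_of_le_of_ne hs.1 this.symm
    linarith
  · rw [hev] at hs0
    simpa using hs0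

end Helpers
section Helpers2
variable {n : ℕ} [NeZero n] {S : Type*} [Fintype S] [DecidableEq S]

/-- Block diagonal matrix. -/
def blkDiag (M : Fin n → Matrix S S ℝ) : Matrix (Fin n × S) (Fin n × S) ℝ :=
  fun p q => if p.1 = q.1 then M p.1 p.2 q.2 else 0

/-- The sign of the antiperiodic shift. -/
def antiSign (k : Fin n) : ℝ := if (k : ℕ) = 0 then -1 else 1

/-- The small antiperiodic shift. -/
def smallShift (n : ℕ) [NeZero n] : Matrix (Fin n) (Fin n) ℝ :=
  fun p q => if q = p - 1 then antiSign p else 0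

/-- The antiperiodic shift. -/
def antiShift (n : ℕ) [NeZero n] (S : Type*) [DecidableEq S] :
    Matrix (Fin n × S) (Fin n × S) ℝ :=
  fun p q => if q.1 = p.1 - 1 then (if p.2 = q.2 then antiSign p.1 else 0) else 0

theorem antiSign_mul_self (k : Fin n) : antiSign k * antiSign k = 1 := by
  unfold antiSign; split_ifs <;> norm_num

theorem blkDiag_mul_apply {L : Type*} (M : Fin n → Matrix S S ℝ) (X : Matrix (Fin n × S) L ℝ)
    (p : Fin n × S) (q : L) :
    (blkDiag M * X) p q = ∑ a, M p.1 p.2 a * X (p.1, a) q := by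
  simp [Matrix.mul_apply, blkDiag, Fintype.sum_prod_type_right, ite_mul]

theorem blkDiag_mul (M M' : Fin n → Matrix S S ℝ) :
    blkDiag M * blkDiag M' = blkDiag (fun k => M k * M' k) := by
  ext p q
  rw [blkDiag_mul_apply]
  by_cases h : p.1 = q.1 <;> simp [blkDiag, h, Matrix.mul_apply]

theorem blkDiag_one : blkDiag (fun _ : Fin n => (1 : Matrix S S ℝ)) = 1 := by
  ext ⟨p, a⟩ ⟨q, b⟩
  by_cases h : p = q <;> by_cases h' : a = b <;> simp [blkDiag, h, h', Matrix.one_apply]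

theorem blkDiag_det (M : Fin n → Matrix S S ℝ) : (blkDiag M).det = ∏ k, (M k).det := by
  rw [← Matrix.det_blockDiagonal, ← Matrix.det_submatrix_equiv_self (Equiv.prodComm (Fin n) S)]
  rfl

theorem blkDiag_shift_apply (M : Fin n → Matrix S S ℝ) (p q : Fin n × S) :
    (blkDiag M * antiShift n S) p q =
      if q.1 = p.1 - 1 then antiSign p.1 * M p.1 p.2 q.2 else 0 := by
  rw [blkDiag_mul_apply]
  by_cases h : q.1 = p.1 - 1 <;> simp [antiShift, h, mul_comm]

theorem shift_mul_apply {L : Type*} (X : Matrix (Fin n × S) L ℝ) (p : Fin n × S) (q : L) :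
    (antiShift n S * X) p q = antiSign p.1 * X (p.1 - 1, p.2) q := by
  simp [Matrix.mul_apply, antiShift, Fintype.sum_prod_type_right, ite_mul]

theorem shift_mul_transpose : antiShift n S * (antiShift n S)ᵀ = 1 := by
  ext ⟨p, a⟩ ⟨q, b⟩
  rw [shift_mul_apply]
  by_cases h : p = q <;> by_cases h' : a = b
  · subst h; subst h'; simp [antiShift, antiSign_mul_self]
  · subst h; simp [antiShift, h', Ne.symm h']
  all_goals simp [antiShift, h, Matrix.one_apply]
 
theorem shift_transpose_mul : (antiShift n S)ᵀ * antiShift n S = 1 :=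
  mul_eq_one_comm.mp shift_mul_transpose

theorem shift_comm (M M' : Fin n → Matrix S S ℝ) (h : ∀ k, M k = M' (k - 1)) :
    blkDiag M * antiShift n S = antiShift n S * blkDiag M' := by
  ext p q
  rw [blkDiag_shift_apply, shift_mul_apply, h]
  by_cases h : q.1 = p.1 - 1
  · simp [blkDiag, h]
  · simp [blkDiag, h, Ne.symm h]

theorem smallShift_det : (smallShift n).det = (-1) ^ n := by
  obtain ⟨k, rfl⟩ := Nat.exists_eq_succ_of_ne_zero (NeZero.ne n)
  have h1 : smallShift (k + 1) = diagonal (antiSign) * 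
      ((finRotate (k+1))⁻¹ : Equiv.Perm (Fin (k+1))).permMatrix ℝ := by
    ext p q
    rw [Matrix.diagonal_mul]
    have : ((finRotate (k+1))⁻¹ : Equiv.Perm (Fin (k+1))) p = p - 1 := by
      rw [Equiv.Perm.inv_eq_iff_eq, finRotate_apply]; simp
    simp [smallShift, Equiv.Perm.permMatrix, PEquiv.toMatrix_apply, this, eq_comm]
  have h2 : (∏ i : Fin (k+1), antiSign i) = -1 := by
    rw [Fin.prod_univ_succ]; simp [antiSign]
  change (smallShift (k + 1)).det = (-1) ^ (k + 1)
  rw [h1, Matrix.det_mul, Matrix.det_diagonal, h2, Matrix.det_permutation,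
    Equiv.Perm.sign_inv, sign_finRotate]
  simp [pow_succ]

open scoped Kronecker in
theorem neg_shift_det : (-antiShift n S).det = 1 := by
  have h : antiShift n S = smallShift n ⊗ₖ (1 : Matrix S S ℝ) := by
    ext ⟨p, a⟩ ⟨q, b⟩
    simp [antiShift, smallShift, Matrix.one_apply]
    split_ifs <;> simp
  rw [Matrix.det_neg, h, Matrix.det_kronecker, smallShift_det]
  simp only [Fintype.card_prod, Fintype.card_fin, det_one, one_pow, mul_one]
  rw [← pow_mul, ← mul_pow]; norm_num

theorem cyclic_det (T Q : Fin n → Matrix S S ℝ) (h0 : Q 0 = 1)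
    (hs : ∀ k, k ≠ 0 → Q k = T k * Q (k - 1)) :
    (1 - blkDiag T * antiShift n S).det = (1 + T 0 * Q (0 - 1)).det := by
  let N : Matrix (Fin n × S) (Fin n × S) ℝ :=
    fun p q => if p.1 ≠ 0 then (if q.1 = p.1 - 1 then T p.1 p.2 q.2 else 0) else 0
  let Qm : Matrix (Fin n × S) S ℝ := fun p b => Q p.1 p.2 b
  let E : Matrix S (Fin n × S) ℝ := fun a q => if q.1 = 0 - 1 then T 0 a q.2 else 0
  let J : Matrix (Fin n × S) S ℝ := fun p b => if p.1 = 0 then (1 : Matrix S S ℝ) p.2 b else 0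
  have hJ : (1 - N) * Qm = J := by
    rw [Matrix.sub_mul, Matrix.one_mul]
    ext p b
    by_cases hp : p.1 = 0
    · simp only [Matrix.sub_apply, Matrix.mul_apply]
      simp [N, Qm, J, hp, h0]
    · have h1 : (N * Qm) p b = (T p.1 * Q (p.1 - 1)) p.2 b := by
        simp only [Matrix.mul_apply]
        simp [N, Qm, hp, Fintype.sum_prod_type_right, ite_mul]
      rw [Matrix.sub_apply, h1, ← hs _ hp]
      simp [Qm, J, hp]
  have hfac : 1 - blkDiag T * antiShift n S = (1 - N) * (1 + Qm * E) := by
    rw [Matrix.mul_add, Matrix.mul_one, ← Matrix.mul_assoc, hJ]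
    ext p q
    rw [Matrix.sub_apply, blkDiag_shift_apply, Matrix.add_apply, Matrix.sub_apply]
    by_cases hp : p.1 = 0
    · simp only [Matrix.mul_apply]
      simp [J, E, N, hp, antiSign, Matrix.one_apply]
      split_ifs <;> simp
    · have : (p.1 : ℕ) ≠ 0 := by simpa using hp
      simp only [Matrix.mul_apply]
      simp [J, E, N, hp, antiSign]
  have hN : (1 - N).det = 1 := by
    have hb : BlockTriangular (1 - N) (fun p => OrderDual.toDual p.1) := by
      intro p q hpq
      have hpq : p.1 < q.1 := hpq
      have h1 : p ≠ q := by rintro rfl; exact lt_irrefl _ hpq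
      have h2 : p.1 ≠ 0 → q.1 ≠ p.1 - 1 := by
        intro h h'
        have := Fin.val_sub_one_of_ne_zero h
        rw [h', Fin.lt_def] at hpq
        omega
      by_cases hp : p.1 = 0
      · simp only [Matrix.sub_apply]
        simp [N, h1, hp]
      · simp only [Matrix.sub_apply]
        simp [N, h1, hp, h2 hp]
    rw [hb.det_fintype]
    refine Finset.prod_eq_one fun k _ => ?_
    have hone : (1 - N).toSquareBlock (fun p => OrderDual.toDual p.1) k = 1 := ?_
    · rw [hone, Matrix.det_one]
    ext ⟨p, hp⟩ ⟨q, hq⟩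
    have hpq : q.1 = p.1 := OrderDual.toDual.injective (hq.trans hp.symm)
    have h2 : p.1 ≠ 0 → p.1 ≠ p.1 - 1 := by
      intro h h'
      have := Fin.val_sub_one_of_ne_zero h
      have h3 : (p.1 : ℕ) ≠ 0 := by simpa using h
      rw [← h'] at this
      omega
    by_cases hp : p.1 = 0
    · change (1 : Matrix (Fin n × S) (Fin n × S) ℝ) p q - N p q = _
      simp [N, hp, Matrix.one_apply]
    · change (1 : Matrix (Fin n × S) (Fin n × S) ℝ) p q - N p q = _
      simp [N, hp, hpq, h2 hp, Matrix.one_apply]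
  rw [hfac, Matrix.det_mul, hN, one_mul, Matrix.det_one_add_mul_comm]
  congr 2
  ext a b
  simp only [Matrix.mul_apply]
  simp [E, Qm, Fintype.sum_prod_type_right, ite_mul]

end Helpers2

theorem hessianNeg_eq (m n : ℕ) [NeZero n] (A B : ℤ → Matrix (Fin m) (Fin m) ℝ) :
    hessianNeg m n A B = blkDiag (fun k : Fin n => A ((k : ℕ) : ℤ))
      - blkDiag (fun k : Fin n => B (((k : ℕ) : ℤ) - 1)) * antiShift n (Fin m)
      - blkDiag (fun k : Fin n => (B ((k : ℕ) : ℤ))ᵀ) * (antiShift n (Fin m))ᵀ := by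
  ext p q
  have h3 : (blkDiag (fun k : Fin n => (B ((k : ℕ) : ℤ))ᵀ) * (antiShift n (Fin m))ᵀ) p q =
      if q.1 = p.1 + 1 then antiSign (p.1 + 1) * B ((p.1 : ℕ) : ℤ) q.2 p.2 else 0 := by
    rw [blkDiag_mul_apply]
    by_cases h : q.1 = p.1 + 1
    · simp [antiShift, h, mul_comm]
    · have : p.1 ≠ q.1 - 1 := fun h' => h (by rw [h']; simp)
      simp [antiShift, h, this]
  have h4 : antiSign (p.1 + 1) = if (p.1 : ℕ) = n - 1 then (-1 : ℝ) else 1 := by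
    unfold antiSign
    obtain ⟨k, rfl⟩ := Nat.exists_eq_succ_of_ne_zero (NeZero.ne n)
    have : ((p.1 + 1 : Fin (k+1)) : ℕ) = 0 ↔ (p.1 : ℕ) = k := by
      rw [Fin.val_add_one]
      split_ifs with h
      · simp [h]
      · simp; intro h'; exact h (Fin.ext h')
    simp [this]
  rw [Matrix.sub_apply, Matrix.sub_apply, blkDiag_shift_apply, h3, h4]
  unfold hessianNeg
  simp only [blkDiag, antiSign, eq_comm (a := p.1) (b := q.1)]
  split_ifs <;> ring

theorem monodromy_succ (m k : ℕ) (A B : ℤ → Matrix (Fin m) (Fin m) ℝ) :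
    monodromy m (k + 1) A B = transferMatrix m A B ((k : ℤ) + 1) * monodromy m k A B := by
  simp [monodromy, List.range_succ]

theorem hessian_det (m n : ℕ) [NeZero n] (A B : ℤ → Matrix (Fin m) (Fin m) ℝ)
    (hAper : ∀ i, A (i + n) = A i) (hBper : ∀ i, B (i + n) = B i)
    (hBinv : ∀ i, IsUnit (B i).det) :
    (∏ i : Fin n, (B ((i : ℕ) : ℤ)).det) * (monodromy m n A B + 1).det =
      (hessianNeg m n A B).det := by
  set T : Fin n → Matrix (Fin m ⊕ Fin m) (Fin m ⊕ Fin m) ℝ :=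
    fun k => transferMatrix m A B ((k : ℕ) : ℤ) with hT
  have hn : 0 < n := Nat.pos_of_ne_zero (NeZero.ne n)
  have h1 : (monodromy m n A B + 1).det = (1 - blkDiag T * antiShift n (Fin m ⊕ Fin m)).det := by
    rw [cyclic_det T (fun k => monodromy m (k : ℕ) A B)]
    · obtain ⟨k, rfl⟩ := Nat.exists_eq_succ_of_ne_zero (NeZero.ne n)
      have h2 : ((0 - 1 : Fin (k + 1)) : ℕ) = k := by simp
      have h3 : transferMatrix m A B ((k : ℤ) + 1) = T 0 := by
        have hA := hAper 0
        have hB := hBper 0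
        have hB' := hBper (-1)
        simp only [hT, transferMatrix]
        push_cast at hA hB hB'
        simp only [zero_add] at hA hB
        rw [show (-1 + ((k:ℤ) + 1)) = (k:ℤ) + 1 - 1 by ring] at hB'
        rw [hA, hB, hB']
        simp
      have h4 : monodromy m k.succ A B = _ := monodromy_succ m k A B
      rw [h4, h2, h3, add_comm]
    · simp [monodromy]
    · intro k hk
      have h4 := Fin.val_sub_one_of_ne_zero hk
      have h5 : (k : ℕ) ≠ 0 := by simpa using hk
      have h6 : (k : ℕ) = ((k - 1 : Fin n) : ℕ) + 1 := by omega
      conv_lhs => rw [h6, monodromy_succ]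
      simp only [hT]
      congr 2
      rw [h6]; push_cast; rfl
  set Sh := antiShift n (Fin m) with hSh
  set Bi := blkDiag (fun k : Fin n => ((B ((k : ℕ) : ℤ))ᵀ)⁻¹) with hBi
  set Bt := blkDiag (fun k : Fin n => (B ((k : ℕ) : ℤ))ᵀ) with hBt
  set Bm := blkDiag (fun k : Fin n => B (((k : ℕ) : ℤ) - 1)) with hBm
  set AA := blkDiag (fun k : Fin n => A ((k : ℕ) : ℤ)) with hAA
  have hBB : Bt * Bi = 1 := by
    rw [hBt, hBi, blkDiag_mul, ← blkDiag_one]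
    congr 1
    funext k
    exact Matrix.mul_nonsing_inv _ (by rw [Matrix.det_transpose]; exact hBinv _)
  have h2 : (1 - blkDiag T * antiShift n (Fin m ⊕ Fin m)).det =
      (fromBlocks 1 (-Sh) (Bi * Bm * Sh) (1 - Bi * AA * Sh)).det := by
    rw [← Matrix.det_submatrix_equiv_self (Equiv.prodSumDistrib (Fin n) (Fin m) (Fin m))]
    congr 1
    ext ⟨p, a⟩ ⟨q, b⟩
    rw [hBi, hBm, hAA, blkDiag_mul, blkDiag_mul]
    rw [Matrix.sub_apply, blkDiag_shift_apply]
    rcases a with a | a <;> rcases b with b | b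
    · simp [hT, transferMatrix, Matrix.one_apply]
    · simp [hT, transferMatrix, Matrix.one_apply, hSh, antiShift]
    · simp [hT, transferMatrix, Matrix.one_apply, hSh, blkDiag_shift_apply]
      split_ifs <;> simp
    · simp [hT, transferMatrix, Matrix.one_apply, hSh, blkDiag_shift_apply]
  rw [h1, h2, Matrix.det_fromBlocks_one₁₁]
  have h3 : (∏ i : Fin n, (B ((i : ℕ) : ℤ)).det) = Bt.det := by
    rw [hBt, blkDiag_det]; simp
  rw [h3, ← Matrix.det_mul]
  have h4 : Bt * (1 - Bi * AA * Sh - Bi * Bm * Sh * -Sh) = hessianNeg m n A B * (-Sh) := by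
    rw [hessianNeg_eq]
    have h5 : Shᵀ * Sh = 1 := shift_transpose_mul
    calc _ = Bt - (Bt * Bi) * AA * Sh + (Bt * Bi) * Bm * Sh * Sh := by noncomm_ring
      _ = Bt * (Shᵀ * Sh) - AA * Sh + Bm * Sh * Sh := by rw [hBB, h5]; simp
      _ = _ := by noncomm_ring
  rw [h4, Matrix.det_mul, neg_shift_det, mul_one]

theorem hessian_symm (m n : ℕ) [NeZero n] (A B : ℤ → Matrix (Fin m) (Fin m) ℝ)
    (hBper : ∀ i, B (i + n) = B i) (hAsym : ∀ i, (A i)ᵀ = A i) :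
    (hessianNeg m n A B)ᵀ = hessianNeg m n A B := by
  have hc := shift_comm (S := Fin m) (fun k : Fin n => B (((k : ℕ) : ℤ) - 1))
    (fun k : Fin n => B ((k : ℕ) : ℤ)) (by
      intro k
      by_cases hk : k = 0
      · subst hk
        obtain ⟨k, rfl⟩ := Nat.exists_eq_succ_of_ne_zero (NeZero.ne n)
        rw [← hBper]
        simp
      · have h4 := Fin.val_sub_one_of_ne_zero hk
        have h5 : (k : ℕ) ≠ 0 := by simpa using hk
        congr 1
        omega)
  have ht : ∀ M : Fin n → Matrix (Fin m) (Fin m) ℝ, (blkDiag M)ᵀ = blkDiag (fun k => (M k)ᵀ) := by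
    intro M
    ext p q
    by_cases h : p.1 = q.1
    · simp [blkDiag, h]
    · simp [blkDiag, h, Ne.symm h]
  rw [hessianNeg_eq, hc]
  simp only [Matrix.transpose_sub, Matrix.transpose_mul, ht, hAsym, Matrix.transpose_transpose]
  abel

theorem hessianNeg_symm_and_instability (m n : ℕ) (hm : 0 < m) [NeZero n]
    (A B : ℤ → Matrix (Fin m) (Fin m) ℝ)
    (hAper : ∀ i, A (i + n) = A i) (hBper : ∀ i, B (i + n) = B i)
    (hAsym : ∀ i, (A i)ᵀ = A i) (hBinv : ∀ i, IsUnit (B i).det) :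
    (hessianNeg m n A B)ᵀ = hessianNeg m n A B ∧
    (IsUnit (hessianNeg m n A B).det →
      Real.sign (∏ i : Fin n, (B ((i : ℕ) : ℤ)).det) *
        (-1 : ℝ) ^ (matIndex (hessianNeg m n A B)) < 0 →
      ∃ ρ : ℝ, ρ < -1 ∧ (monodromy m n A B - ρ • 1).det = 0) := by
  have hsymm := hessian_symm m n A B hBper hAsym
  refine ⟨hsymm, fun hu hneg => ?_⟩
  have : Nonempty (Fin m ⊕ Fin m) := ⟨Sum.inl ⟨0, hm⟩⟩
  apply exists_root_lt_neg_one
  have h1 := matIndex_sign _ hsymm hu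
  rw [← hessian_det m n A B hAper hBper hBinv] at h1
  set b := ∏ i : Fin n, (B ((i : ℕ) : ℤ)).det
  rcases neg_one_pow_eq_or ℝ (matIndex (hessianNeg m n A B)) with h | h <;> rw [h] at h1 hneg
  · rcases lt_trichotomy b 0 with hb | hb | hb
    · nlinarith
    · simp [hb] at hneg
    · rw [Real.sign_of_pos hb] at hneg; linarith
  · rcases lt_trichotomy b 0 with hb | hb | hb
    · rw [Real.sign_of_neg hb] at hneg; linarith
    · simp [hb] at hneg
    · nlinarith
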